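/- arXiv:1406.0989 — 2 statements merged into one kernel-verified Lean document; each statement's English description precedes it below -/
import Mathlib

section
/- Let a > 0 and let g, h be continuous functions on [a,∞) with h positive on [a,∞) and h ∈ NRV_γ for some γ > 1, and suppose lim_{u→∞} g(u)/h(u) = 1. Let T > 0 and let v, w : (0,T] → [a,∞) be differentiable functions satisfying v'(t) = −g(v(t)) and w'(t) = −h(w(t)) for all t ∈ (0,T], with v(t) → ∞ and w(t) → ∞ as t → 0⁺. Then lim_{t→0⁺} v(t)/w(t) = 1. -/
open Filter MeasureTheory Set Topology

noncomputable section

/-- `f` is normalized regularly varying at infinity of index `ρ`. -/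
def IsNRV (f : ℝ → ℝ) (ρ : ℝ) : Prop :=
  ∃ b : ℝ, 0 < b ∧ ∃ Mstar : ℝ, 0 < Mstar ∧ ∃ φ : ℝ → ℝ,
    ContinuousOn φ (Ici b) ∧ Tendsto φ atTop (𝓝 0) ∧
    ∀ u, b ≤ u → f u = Mstar * u ^ ρ * Real.exp (∫ t in b..u, φ t / t)

/-!
A solution of `y' = -h(y)` that blows up at `t = 0⁺` satisfies `F(y(t)) = t`, where
`F(u) = ∫_u^∞ ds / h(s)`. If only `v' = -g(v)` with `g ∼ h`, then `(F ∘ v)' = g(v) / h(v) → 1`, so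
`F(v(t)) ∼ t ∼ F(w(t))` by L'Hôpital's rule. To pass from `F(v) ∼ F(w)` to `v ∼ w`, `F` has to decay
at least like a negative power: Potter's bound for `h ∈ NRV_γ` makes `h(u) / u ^ p` eventually
nondecreasing for every `p < γ`, and by rescaling the integral this makes `u ^ (p - 1) * F(u)`
eventually nonincreasing when `p > 1`.
-/

theorem monotoneOn_rpow_mul_exp_integral {φ : ℝ → ℝ} {δ b c : ℝ} (hb : 0 < b) (hbc : b ≤ c)
    (hφc : ContinuousOn φ (Ici b)) (hφ : ∀ t ∈ Ici c, -δ ≤ φ t) :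
    MonotoneOn (fun u => u ^ δ * Real.exp (∫ t in b..u, φ t / t)) (Ici c) := by
  intro x (hx : c ≤ x) y _ hxy
  have hx0 : 0 < x := by linarith
  have hy0 : 0 < y := by linarith
  have hint : ∀ {r s}, b ≤ r → r ≤ s → IntervalIntegrable (fun t => φ t / t) volume r s := by
    intro r s hr hrs
    refine ContinuousOn.intervalIntegrable_of_Icc hrs fun t ht => ?_
    have hbt : b ≤ t := hr.trans ht.1
    exact ((hφc t hbt).div continuousWithinAt_id (hb.trans_le hbt).ne').mono
      fun s hs => hr.trans hs.1
  have hsplit : (∫ t in b..y, φ t / t) = (∫ t in b..x, φ t / t) + ∫ t in x..y, φ t / t :=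
    (intervalIntegral.integral_add_adjacent_intervals (hint le_rfl (by linarith))
      (hint (by linarith) hxy)).symm
  have hlog : -δ * (Real.log y - Real.log x) ≤ ∫ t in x..y, φ t / t := by
    rw [← Real.log_div hy0.ne' hx0.ne', ← integral_inv_of_pos hx0 hy0,
      ← intervalIntegral.integral_const_mul]
    refine intervalIntegral.integral_mono_on hxy ?_ (hint (by linarith) hxy) fun t ht => ?_
    · exact (intervalIntegrable_inv_iff.2 (Or.inr (notMem_uIcc_of_lt hx0 hy0))).const_mul _
    · have ht0 : 0 < t := hx0.trans_le ht.1
      rw [div_eq_mul_inv]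
      gcongr
      exact hφ t (hx.trans ht.1)
  simp only [Real.rpow_def_of_pos hx0, Real.rpow_def_of_pos hy0, ← Real.exp_add]
  refine Real.exp_le_exp.2 ?_
  linarith

theorem IsNRV.eventually_monotoneOn_div_rpow {f : ℝ → ℝ} {ρ p : ℝ} (hf : IsNRV f ρ) (hp : p < ρ) :
    ∀ᶠ c in atTop, MonotoneOn (fun u => f u / u ^ p) (Ici c) := by
  obtain ⟨b, hb, M, hM, φ, hφc, hφ0, hrep⟩ := hf
  have hφ : ∀ᶠ t in atTop, -(ρ - p) ≤ φ t := hφ0.eventually_const_le (by linarith)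
  filter_upwards [eventually_forall_ge_atTop.2 hφ, eventually_ge_atTop b] with c hc hbc
  refine ((monotone_mul_left_of_nonneg hM.le).comp_monotoneOn
    (monotoneOn_rpow_mul_exp_integral hb hbc hφc hc)).congr fun u (hu : c ≤ u) => ?_
  have hu0 : 0 < u := by linarith
  simp only [Function.comp_apply, hrep u (hbc.trans hu), Real.rpow_sub hu0]
  ring

theorem hasDerivAt_integral_Ioi {E : Type*} [NormedAddCommGroup E] [NormedSpace ℝ E]
    [CompleteSpace E] {f : ℝ → E} {a u : ℝ} (hf : IntegrableOn f (Ioi a)) (hau : a < u)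
    (hfu : ContinuousAt f u) : HasDerivAt (fun x => ∫ s in Ioi x, f s) (-f u) u := by
  have hint : IntervalIntegrable f volume a u :=
    (intervalIntegrable_iff_integrableOn_Ioc_of_le hau.le).2 (hf.mono_set Ioc_subset_Ioi_self)
  have hderiv := (intervalIntegral.integral_hasDerivAt_right hint
    ⟨Ioi a, Ioi_mem_nhds hau, hf.1⟩ hfu).const_sub (∫ s in Ioi a, f s)
  refine hderiv.congr_of_eventuallyEq ?_
  filter_upwards [Ioi_mem_nhds hau] with x hx
  rw [← intervalIntegral.integral_Ioi_sub_Ioi hf hx.le, sub_sub_cancel]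

/-- The time `∫_u^∞ ds / h(s)` separating the level `u` from infinity along a solution of
`y' = -h(y)`. It is `0` by convention when the integral diverges. -/
def blowUpTime (h : ℝ → ℝ) (u : ℝ) : ℝ :=
  ∫ s in Ioi u, (h s)⁻¹

section blowUpTime

variable {h : ℝ → ℝ} {a p : ℝ}

theorem hasDerivAt_blowUpTime {u : ℝ} (hint : IntegrableOn (fun s => (h s)⁻¹) (Ioi a))
    (hau : a < u) (hhc : ContinuousAt h u) (hhu : h u ≠ 0) :
    HasDerivAt (blowUpTime h) (-(h u)⁻¹) u :=
  hasDerivAt_integral_Ioi hint hau (hhc.inv₀ hhu)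

theorem blowUpTime_pos (hint : IntegrableOn (fun s => (h s)⁻¹) (Ioi a))
    (hpos : ∀ s, a < s → 0 < h s) : 0 < blowUpTime h a := by
  have hsupp : Ioi a ⊆ Function.support fun s => (h s)⁻¹ :=
    fun s hs => (inv_pos.2 (hpos s hs)).ne'
  rw [blowUpTime, setIntegral_pos_iff_support_of_nonneg_ae _ hint,
    inter_eq_self_of_subset_right hsupp, Real.volume_Ioi]
  · exact ENNReal.zero_lt_top
  · filter_upwards [ae_restrict_mem measurableSet_Ioi] with s hs
    exact (inv_pos.2 (hpos s hs)).le

theorem tendsto_blowUpTime_comp_div_self {g v : ℝ → ℝ}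
    (hint : IntegrableOn (fun s => (h s)⁻¹) (Ioi a)) (hhc : ContinuousOn h (Ici a))
    (hne : ∀ u, a ≤ u → h u ≠ 0) (hlim : Tendsto (fun u => g u / h u) atTop (𝓝 1))
    (hv : ∀ᶠ t in 𝓝[>] 0, HasDerivAt v (-(g (v t))) t) (hv0 : Tendsto v (𝓝[>] 0) atTop) :
    Tendsto (fun t => blowUpTime h (v t) / t) (𝓝[>] 0) (𝓝 1) := by
  apply HasDerivAt.lhopital_zero_nhdsGT (f' := fun t => g (v t) / h (v t)) (g' := fun _ => 1)
  · filter_upwards [hv, hv0.eventually_gt_atTop a] with t hvt hat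
    have hF : HasDerivAt (blowUpTime h) (-(h (v t))⁻¹) (v t) :=
      hasDerivAt_blowUpTime hint hat (hhc.continuousAt (Ici_mem_nhds hat)) (hne _ hat.le)
    exact (hF.comp t hvt).congr_deriv (by rw [neg_mul_neg, div_eq_inv_mul])
  · exact .of_forall hasDerivAt_id
  · exact .of_forall fun _ => one_ne_zero
  · exact tendsto_integral_Ioi_zero hv0
  · exact tendsto_nhdsWithin_of_tendsto_nhds tendsto_id
  · simpa only [div_one, Function.comp_def] using hlim.comp hv0

theorem inv_apply_mul_le_of_monotoneOn_div_rpow {c x : ℝ} (ha : 0 < a) (hhx : 0 < h x)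
    (hmono : MonotoneOn (fun u => h u / u ^ p) (Ici a)) (hc : 1 ≤ c) (hx : a ≤ x) :
    (h (c * x))⁻¹ ≤ c ^ (-p) * (h x)⁻¹ := by
  have hc0 : 0 < c := by linarith
  have hx0 : 0 < x := by linarith
  have hxcx : x ≤ c * x := le_mul_of_one_le_left hx0.le hc
  have hgrowth : c ^ p * h x ≤ h (c * x) := by
    have hdiv : h x / x ^ p ≤ h (c * x) / (c * x) ^ p := hmono hx (hx.trans hxcx) hxcx
    rw [Real.mul_rpow hc0.le hx0.le, div_le_div_iff₀ (by positivity) (by positivity)] at hdiv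
    refine le_of_mul_le_mul_right ?_ (Real.rpow_pos_of_pos hx0 p)
    linarith
  calc (h (c * x))⁻¹ ≤ (c ^ p * h x)⁻¹ := by gcongr
    _ = c ^ (-p) * (h x)⁻¹ := by rw [mul_inv, Real.rpow_neg hc0.le]

theorem integrableOn_inv_of_monotoneOn_div_rpow (hp : 1 < p) (ha : 0 < a)
    (hhc : ContinuousOn h (Ici a)) (hhpos : ∀ u, a ≤ u → 0 < h u)
    (hmono : MonotoneOn (fun u => h u / u ^ p) (Ici a)) :
    IntegrableOn (fun s => (h s)⁻¹) (Ioi a) := by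
  have hmajor : IntegrableOn (fun s => a ^ p * (h a)⁻¹ * s ^ (-p)) (Ioi a) :=
    (integrableOn_Ioi_rpow_of_lt (by linarith) ha).const_mul _
  have hmeas : AEStronglyMeasurable (fun s => (h s)⁻¹) (volume.restrict (Ioi a)) :=
    ((hhc.inv₀ fun u hu => (hhpos u hu).ne').mono Ioi_subset_Ici_self).aestronglyMeasurable
      measurableSet_Ioi
  refine hmajor.mono' hmeas ?_
  filter_upwards [ae_restrict_mem measurableSet_Ioi] with s (hs : a < s)
  have hs0 : 0 < s := ha.trans hs
  have hle := inv_apply_mul_le_of_monotoneOn_div_rpow ha (hhpos a le_rfl) hmono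
    ((one_le_div ha).2 hs.le) le_rfl
  rw [div_mul_cancel₀ s ha.ne', Real.div_rpow hs0.le ha.le, Real.rpow_neg ha.le,
    div_inv_eq_mul] at hle
  rw [Real.norm_of_nonneg (inv_pos.2 (hhpos s hs.le)).le]
  linarith

theorem blowUpTime_mul_le {c x : ℝ} (ha : 0 < a) (hhpos : ∀ u, a ≤ u → 0 < h u)
    (hmono : MonotoneOn (fun u => h u / u ^ p) (Ici a))
    (hint : IntegrableOn (fun s => (h s)⁻¹) (Ioi a)) (hc : 1 ≤ c) (hx : a ≤ x) :
    blowUpTime h (c * x) ≤ c ^ (1 - p) * blowUpTime h x := by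
  have hc0 : 0 < c := by linarith
  have hintx : ∀ {y}, a ≤ y → IntegrableOn (fun s => (h s)⁻¹) (Ioi y) :=
    fun hy => hint.mono_set (Ioi_subset_Ioi hy)
  have hcx : a ≤ c * x := hx.trans (le_mul_of_one_le_left (ha.le.trans hx) hc)
  calc blowUpTime h (c * x) = c * ∫ s in Ioi x, (h (c * s))⁻¹ :=
        (integral_comp_mul_left_Ioi' (fun s => (h s)⁻¹) x hc0).symm
    _ ≤ c * ∫ s in Ioi x, c ^ (-p) * (h s)⁻¹ := by
        gcongr 1
        refine setIntegral_mono_on ?_ ((hintx hx).const_mul _) measurableSet_Ioi fun s hs => ?_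
        · exact (integrableOn_Ioi_comp_mul_left_iff (fun s => (h s)⁻¹) x hc0).2 (hintx hcx)
        · have has : a ≤ s := hx.trans (le_of_lt hs)
          exact inv_apply_mul_le_of_monotoneOn_div_rpow ha (hhpos s has) hmono hc has
    _ = c ^ (1 - p) * blowUpTime h x := by
        rw [integral_const_mul, ← mul_assoc, sub_eq_add_neg, Real.rpow_add hc0, Real.rpow_one,
          blowUpTime]

theorem antitoneOn_rpow_mul_blowUpTime (ha : 0 < a) (hhpos : ∀ u, a ≤ u → 0 < h u)
    (hmono : MonotoneOn (fun u => h u / u ^ p) (Ici a))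
    (hint : IntegrableOn (fun s => (h s)⁻¹) (Ioi a)) :
    AntitoneOn (fun u => u ^ (p - 1) * blowUpTime h u) (Ici a) := by
  intro x (hx : a ≤ x) y _ hxy
  have hx0 : 0 < x := by linarith
  have hy0 : 0 < y := by linarith
  have hle := blowUpTime_mul_le ha hhpos hmono hint ((one_le_div hx0).2 hxy) hx
  rw [div_mul_cancel₀ y hx0.ne'] at hle
  calc y ^ (p - 1) * blowUpTime h y
      ≤ y ^ (p - 1) * ((y / x) ^ (1 - p) * blowUpTime h x) := by gcongr
    _ = x ^ (p - 1) * blowUpTime h x := by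
        rw [← neg_sub p 1, Real.rpow_neg (by positivity), Real.div_rpow hy0.le hx0.le]
        field_simp

end blowUpTime

theorem div_rpow_le_div_of_antitoneOn_rpow_mul {F : ℝ → ℝ} {β a x y : ℝ}
    (hanti : AntitoneOn (fun u => u ^ β * F u) (Ici a)) (hFy : 0 < F y) (hx0 : 0 < x)
    (hx : a ≤ x) (hxy : x ≤ y) : (y / x) ^ β ≤ F x / F y := by
  have hle : y ^ β * F y ≤ x ^ β * F x := hanti hx (hx.trans hxy) hxy
  rw [Real.div_rpow (hx0.le.trans hxy) hx0.le, div_le_div_iff₀ (by positivity) hFy]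
  linarith

theorem div_rpow_mem_Icc_of_antitoneOn_rpow_mul {F : ℝ → ℝ} {β a x y : ℝ} (hβ : 0 ≤ β)
    (hanti : AntitoneOn (fun u => u ^ β * F u) (Ici a)) (hFx : 0 < F x) (hFy : 0 < F y)
    (hx0 : 0 < x) (hy0 : 0 < y) (hx : a ≤ x) (hy : a ≤ y) :
    (x / y) ^ β ∈ Icc (min 1 (F y / F x)) (max 1 (F y / F x)) := by
  rcases le_total x y with hxy | hyx
  · have hbound := div_rpow_le_div_of_antitoneOn_rpow_mul hanti hFy hx0 hx hxy
    rw [← inv_div x, Real.inv_rpow (by positivity), ← inv_div (F y),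
      inv_le_inv₀ (by positivity) (by positivity)] at hbound
    have hle_one : (x / y) ^ β ≤ 1 := Real.rpow_le_one (by positivity) ((div_le_one hy0).2 hxy) hβ
    exact ⟨min_le_of_right_le hbound, le_max_of_le_left hle_one⟩
  · have hbound := div_rpow_le_div_of_antitoneOn_rpow_mul hanti hFx hy0 hy hyx
    have hone_le : 1 ≤ (x / y) ^ β := Real.one_le_rpow ((one_le_div hy0).2 hyx) hβ
    exact ⟨min_le_of_left_le hone_le, le_max_of_le_right hbound⟩

theorem tendsto_div_of_antitoneOn_rpow_mul {α : Type*} {l : Filter α} {F : ℝ → ℝ} {β a : ℝ}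
    {v w : α → ℝ} (hβ : 0 < β) (hF : ∀ u, a ≤ u → 0 < F u)
    (hanti : AntitoneOn (fun u => u ^ β * F u) (Ici a)) (hv : Tendsto v l atTop)
    (hw : Tendsto w l atTop) (hvw : Tendsto (fun t => F (v t) / F (w t)) l (𝓝 1)) :
    Tendsto (fun t => v t / w t) l (𝓝 1) := by
  have hwv : Tendsto (fun t => F (w t) / F (v t)) l (𝓝 1) := by
    simpa only [inv_div, inv_one] using hvw.inv₀ one_ne_zero
  have hv_large : ∀ᶠ t in l, a ≤ v t ∧ 0 < v t :=
    (hv.eventually_ge_atTop a).and (hv.eventually_gt_atTop 0)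
  have hw_large : ∀ᶠ t in l, a ≤ w t ∧ 0 < w t :=
    (hw.eventually_ge_atTop a).and (hw.eventually_gt_atTop 0)
  have hbounds : ∀ᶠ t in l, (v t / w t) ^ β ∈
      Icc (min 1 (F (w t) / F (v t))) (max 1 (F (w t) / F (v t))) := by
    filter_upwards [hv_large, hw_large] with t ⟨hav, hv0⟩ ⟨haw, hw0⟩
    exact div_rpow_mem_Icc_of_antitoneOn_rpow_mul hβ.le hanti (hF _ hav) (hF _ haw) hv0 hw0 hav haw
  have hpow : Tendsto (fun t => (v t / w t) ^ β) l (𝓝 1) :=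
    tendsto_of_tendsto_of_tendsto_of_le_of_le' hwv.min_right hwv.max_right
      (hbounds.mono fun _ ht => ht.1) (hbounds.mono fun _ ht => ht.2)
  have hroot : Tendsto (fun t => ((v t / w t) ^ β) ^ β⁻¹) l (𝓝 1) := by
    simpa only [Real.one_rpow] using hpow.rpow_const (p := β⁻¹) (Or.inl one_ne_zero)
  refine hroot.congr' ?_
  filter_upwards [hv_large, hw_large] with t ⟨_, hv0⟩ ⟨_, hw0⟩
  exact Real.rpow_rpow_inv (by positivity) hβ.ne'

theorem blowup_ode_asymptotic_equivalence_general {p a : ℝ} (hp : 1 < p) {g h : ℝ → ℝ}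
    (hhc : ContinuousOn h (Ici a)) (hhpos : ∀ u, a ≤ u → 0 < h u)
    (hmono : ∀ᶠ c in atTop, MonotoneOn (fun u => h u / u ^ p) (Ici c))
    (hlim : Tendsto (fun u => g u / h u) atTop (𝓝 1)) {v w : ℝ → ℝ}
    (hv : ∀ᶠ t in 𝓝[>] 0, HasDerivAt v (-(g (v t))) t)
    (hw : ∀ᶠ t in 𝓝[>] 0, HasDerivAt w (-(h (w t))) t)
    (hv0 : Tendsto v (𝓝[>] 0) atTop) (hw0 : Tendsto w (𝓝[>] 0) atTop) :
    Tendsto (fun t => v t / w t) (𝓝[>] 0) (𝓝 1) := by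
  obtain ⟨c, hmono, hac, hc⟩ :=
    (hmono.and ((eventually_ge_atTop a).and (eventually_gt_atTop 0))).exists
  replace hhc : ContinuousOn h (Ici c) := hhc.mono (Ici_subset_Ici.2 hac)
  replace hhpos : ∀ u, c ≤ u → 0 < h u := fun u hu => hhpos u (hac.trans hu)
  have hint := integrableOn_inv_of_monotoneOn_div_rpow hp hc hhc hhpos hmono
  have hne : ∀ u, c ≤ u → h u ≠ 0 := fun u hu => (hhpos u hu).ne'
  have hhh : Tendsto (fun u => h u / h u) atTop (𝓝 1) :=
    tendsto_const_nhds.congr' ((eventually_ge_atTop c).mono fun u hu => (div_self (hne u hu)).symm)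
  have hFv := tendsto_blowUpTime_comp_div_self hint hhc hne hlim hv hv0
  have hFw := tendsto_blowUpTime_comp_div_self hint hhc hne hhh hw hw0
  refine tendsto_div_of_antitoneOn_rpow_mul (sub_pos.2 hp) (fun u hu => ?_)
    (antitoneOn_rpow_mul_blowUpTime hc hhpos hmono hint) hv0 hw0 ?_
  · exact blowUpTime_pos (hint.mono_set (Ioi_subset_Ioi hu)) fun s hs => hhpos s (hu.trans hs.le)
  · rw [← div_one (1 : ℝ)]
    refine (hFv.div hFw one_ne_zero).congr' ?_
    filter_upwards [self_mem_nhdsWithin] with t (ht : 0 < t)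
    exact div_div_div_cancel_right₀ ht.ne' _ _

/-- Let `h ∈ NRV_γ`, `γ > 1`, be positive and continuous on `[a,∞)`, `g` continuous
on `[a,∞)` with `g/h → 1` at infinity. If `v, w` solve `v' = -g(v)`, `w' = -h(w)` on
`(0,T]` with `v, w → ∞` as `t → 0⁺`, then `v(t)/w(t) → 1` as `t → 0⁺`. -/
theorem blowup_ode_asymptotic_equivalence (a γ : ℝ) (ha : 0 < a) (hγ : 1 < γ)
    (g h : ℝ → ℝ)
    (hgc : ContinuousOn g (Ici a)) (hhc : ContinuousOn h (Ici a))
    (hhpos : ∀ u, a ≤ u → 0 < h u) (hNRV : IsNRV h γ)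
    (hlim : Tendsto (fun u => g u / h u) atTop (𝓝 1))
    (T : ℝ) (hT : 0 < T) (v w : ℝ → ℝ)
    (hva : ∀ t ∈ Ioc (0:ℝ) T, a ≤ v t) (hwa : ∀ t ∈ Ioc (0:ℝ) T, a ≤ w t)
    (hv : ∀ t ∈ Ioc (0:ℝ) T, HasDerivAt v (-(g (v t))) t)
    (hw : ∀ t ∈ Ioc (0:ℝ) T, HasDerivAt w (-(h (w t))) t)
    (hv0 : Tendsto v (𝓝[>] (0:ℝ)) atTop) (hw0 : Tendsto w (𝓝[>] (0:ℝ)) atTop) :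
    Tendsto (fun t => v t / w t) (𝓝[>] (0:ℝ)) (𝓝 1) := by
  obtain ⟨p, hp, hpγ⟩ := exists_between hγ
  exact blowup_ode_asymptotic_equivalence_general hp hhc hhpos
    (hNRV.eventually_monotoneOn_div_rpow hpγ) hlim (eventually_of_mem (Ioc_mem_nhdsGT hT) hv)
    (eventually_of_mem (Ioc_mem_nhdsGT hT) hw) hv0 hw0
end
end

section
/- Let a > 0 and let g, h be continuous functions on [a,∞) with h positive on [a,∞) and h ∈ RV_γ for some γ > 1, and suppose lim_{u→∞} g(u)/h(u) = 1. Let T > 0 and let v, w : (0,T] → [a,∞) be differentiable functions satisfying v'(t) = −g(v(t)) and w'(t) = −h(w(t)) for all t ∈ (0,T], with v(t) → ∞ and w(t) → ∞ as t → 0⁺. Then lim_{t→0⁺} v(t)/w(t) = 1. -/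
open Filter MeasureTheory Set Topology

noncomputable section

/-- `f` is regularly varying at infinity of index `ρ`. -/
def IsRV (f : ℝ → ℝ) (ρ : ℝ) : Prop :=
  ∀ ξ : ℝ, 0 < ξ → Tendsto (fun u => f (ξ * u) / f u) atTop (𝓝 (ξ ^ ρ))

/-!
Let `F u` be the time that the solution `w` still needs, backwards, to blow up from height `u`; thus
`F (w t) = t - t₀`, where `t₀` is the blow-up time. Since `F' = -1 / h`, L'Hôpital's rule makes `F`
regularly varying of index `1 - γ`. Along `v` one has `(F ∘ v)' = (g / h) ∘ v → 1`, so
`F (v t) / (t - t₀) → 1` and hence `F (v t) / F (w t) → 1`. As `F` is monotone of negative index,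
this forces `v t / w t → 1`.
-/

namespace IsRV

variable {f F : ℝ → ℝ} {ρ : ℝ}

lemma neg (hf : IsRV f ρ) : IsRV (fun u => -f u) ρ := by
  simpa only [IsRV, neg_div_neg_eq] using hf

lemma inv (hf : IsRV f ρ) : IsRV (fun u => (f u)⁻¹) (-ρ) := by
  intro ξ hξ
  rw [Real.rpow_neg hξ.le]
  refine ((hf ξ hξ).inv₀ (Real.rpow_pos_of_pos hξ ρ).ne').congr fun u => ?_
  rw [inv_div_inv, inv_div]

lemma eventually_ne_zero (hf : IsRV f ρ) : ∀ᶠ u in atTop, f u ≠ 0 := by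
  have h_one : Tendsto (fun u => f u / f u) atTop (𝓝 1) := by
    simpa only [one_mul, Real.one_rpow] using hf 1 one_pos
  filter_upwards [h_one.eventually_ne one_ne_zero] with u hu hfu
  exact hu (by rw [hfu, div_zero])

lemma of_hasDerivAt (hf : IsRV f ρ) (hF : ∀ᶠ u in atTop, HasDerivAt F (f u) u)
    (hF_zero : Tendsto F atTop (𝓝 0)) : IsRV F (ρ + 1) := by
  intro ξ hξ
  have h_scale : Tendsto (fun u : ℝ => ξ * u) atTop atTop := tendsto_id.const_mul_atTop hξ
  have hF_scale : ∀ᶠ u in atTop, HasDerivAt (fun u => F (ξ * u)) (f (ξ * u) * ξ) u :=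
    (h_scale.eventually hF).mono fun u hu => hu.comp u (hasDerivAt_const_mul ξ)
  refine HasDerivAt.lhopital_zero_atTop hF_scale hF hf.eventually_ne_zero
    (hF_zero.comp h_scale) hF_zero ?_
  rw [Real.rpow_add_one hξ.ne']
  simpa only [div_mul_eq_mul_div] using (hf ξ hξ).mul_const ξ

/- If `x ≤ ξ * y` for some `ξ < 1`, then `F x / F y ≥ F (ξ * y) / F y`, whose limit is
`ξ ^ ρ > 1`; the upper bound is symmetric. -/
lemma tendsto_div_of_antitoneOn {ι : Type*} {l : Filter ι} {x y : ι → ℝ} {b : ℝ}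
    (hF : IsRV F ρ) (hρ : ρ < 0) (hF_anti : AntitoneOn F (Ici b))
    (hF_pos : ∀ᶠ u in atTop, 0 < F u)
    (hx : Tendsto x l atTop) (hy : Tendsto y l atTop)
    (hxy : Tendsto (fun i => F (x i) / F (y i)) l (𝓝 1)) :
    Tendsto (fun i => x i / y i) l (𝓝 1) := by
  have hF_scale (ξ : ℝ) (hξ : 0 < ξ) : Tendsto (fun i => F (ξ * y i) / F (y i)) l (𝓝 (ξ ^ ρ)) :=
    (hF ξ hξ).comp hy
  have h_scale_ge (ξ : ℝ) (hξ : 0 < ξ) : ∀ᶠ i in l, b ≤ ξ * y i :=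
    (hy.const_mul_atTop hξ).eventually_ge_atTop b
  have hFy_pos : ∀ᶠ i in l, 0 < F (y i) := hy.eventually hF_pos
  refine tendsto_order.2 ⟨fun c hc => ?_, fun c hc => ?_⟩
  · obtain ⟨ξ, hξ, hξ_one⟩ : ∃ ξ, max c 0 < ξ ∧ ξ < 1 := exists_between (max_lt hc one_pos)
    have hξ_pos : 0 < ξ := (le_max_right c 0).trans_lt hξ
    have h_rpow : 1 < ξ ^ ρ := Real.one_lt_rpow_of_pos_of_lt_one_of_neg hξ_pos hξ_one hρ
    filter_upwards [hxy.eventually_lt (hF_scale ξ hξ_pos) h_rpow, hFy_pos, hx.eventually_ge_atTop b,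
      h_scale_ge ξ hξ_pos, hy.eventually_gt_atTop 0] with i hi hFy hbx hbξy hy_pos
    rw [div_lt_div_iff_of_pos_right hFy] at hi
    have h_lt : ξ * y i < x i := hF_anti.reflect_lt hbx hbξy hi
    exact ((le_max_left c 0).trans_lt hξ).trans ((lt_div_iff₀ hy_pos).2 h_lt)
  · have hc_pos : 0 < c := one_pos.trans hc
    have h_rpow : c ^ ρ < 1 := Real.rpow_lt_one_of_one_lt_of_neg hc hρ
    filter_upwards [(hF_scale c hc_pos).eventually_lt hxy h_rpow, hFy_pos, hx.eventually_ge_atTop b,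
      h_scale_ge c hc_pos, hy.eventually_gt_atTop 0] with i hi hFy hbx hbcy hy_pos
    rw [div_lt_div_iff_of_pos_right hFy] at hi
    exact (div_lt_iff₀ hy_pos).2 (hF_anti.reflect_lt hbcy hbx hi)

end IsRV

lemma continuousAt_leftInverse_of_antitoneOn {α β : Type*} [LinearOrder α] [TopologicalSpace α]
    [OrderTopology α] [DenselyOrdered α] [LinearOrder β] [TopologicalSpace β] [OrderTopology β]
    {f : α → β} {g : β → α} {s : Set α} {a : α} (hf : AntitoneOn f s) (hgf : LeftInvOn g f s)
    (hs : s ∈ 𝓝 a) (hfs : f '' s ∈ 𝓝 (f a)) : ContinuousAt g (f a) := by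
  have hg_maps : MapsTo g (f '' s) s :=
    mapsTo_image_iff.2 fun x hx => by rwa [Function.comp_apply, hgf hx]
  have hg_anti : AntitoneOn g (f '' s) :=
    Function.antitoneOn_of_rightInvOn_of_mapsTo hf hgf.rightInvOn_image hg_maps
  refine continuousAt_of_monotoneOn_of_image_mem_nhds (β := αᵒᵈ) hg_anti.dual_right hfs ?_
  change g '' (f '' s) ∈ 𝓝 (g (f a))
  rwa [hgf.image_image, hgf (mem_of_mem_nhds hs)]

section BlowUp

variable {w w' : ℝ → ℝ} {c d : ℝ}

lemma surjOn_Ioc_Ici_of_tendsto_atTop (hcd : c < d) (hw : ContinuousOn w (Ioc c d))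
    (hw_top : Tendsto w (𝓝[>] c) atTop) : SurjOn w (Ioc c d) (Ici (w d)) :=
  isPreconnected_Ioc.intermediate_value_Ici (right_mem_Ioc.2 hcd)
    (le_principal_iff.2 (Ioc_mem_nhdsGT hcd)) hw hw_top

lemma map_nhdsGT_eq_atTop (hw : ∀ᶠ t in 𝓝[>] c, ContinuousAt w t)
    (hw_top : Tendsto w (𝓝[>] c) atTop) : map w (𝓝[>] c) = atTop := by
  refine le_antisymm hw_top fun s hs => ?_
  obtain ⟨d, hcd, hd⟩ := (nhdsGT_basis_Ioc c).eventually_iff.1 (hw.and hs)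
  have hw_cont : ContinuousOn w (Ioc c d) := fun t ht => (hd ht).1.continuousWithinAt
  have hw_surj : SurjOn w (Ioc c d) (Ici (w d)) :=
    surjOn_Ioc_Ici_of_tendsto_atTop hcd hw_cont hw_top
  exact mem_of_superset (Ici_mem_atTop (w d))
    (hw_surj.trans (image_subset_iff.2 fun t ht => (hd ht).2))

lemma exists_leftInverse_hasDerivAt_of_tendsto_atTop
    (hw : ∀ᶠ t in 𝓝[>] c, HasDerivAt w (w' t) t) (hw' : ∀ᶠ t in 𝓝[>] c, w' t < 0)
    (hw_top : Tendsto w (𝓝[>] c) atTop) :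
    ∃ F : ℝ → ℝ, ∀ᶠ t in 𝓝[>] c, F (w t) = t ∧ HasDerivAt F (w' t)⁻¹ (w t) := by
  obtain ⟨d, hcd, hd⟩ := (nhdsGT_basis_Ioc c).eventually_iff.1 (hw.and hw')
  have hw_cont : ContinuousOn w (Ioc c d) := fun t ht => (hd ht).1.continuousAt.continuousWithinAt
  have hw_anti : StrictAntiOn w (Ioc c d) :=
    strictAntiOn_of_hasDerivWithinAt_neg (convex_Ioc c d) hw_cont
      (fun t ht => (hd (interior_subset ht)).1.hasDerivWithinAt)
      (fun t ht => (hd (interior_subset ht)).2)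
  have hw_surj : SurjOn w (Ioc c d) (Ici (w d)) :=
    surjOn_Ioc_Ici_of_tendsto_atTop hcd hw_cont hw_top
  set F : ℝ → ℝ := Function.invFunOn w (Ioc c d)
  have hFw : LeftInvOn F w (Ioc c d) := hw_anti.injOn.leftInvOn_invFunOn
  have hwF : RightInvOn F w (Ici (w d)) := hw_surj.rightInvOn_invFunOn
  refine ⟨F, ?_⟩
  filter_upwards [Ioo_mem_nhdsGT hcd] with t ht
  have ht' : t ∈ Ioc c d := Ioo_subset_Ioc_self ht
  have h_nhds : Ici (w d) ∈ 𝓝 (w t) := Ici_mem_nhds (hw_anti ht' (right_mem_Ioc.2 hcd) ht.2)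
  have hF_cont : ContinuousAt F (w t) :=
    continuousAt_leftInverse_of_antitoneOn hw_anti.antitoneOn hFw (Ioc_mem_nhds ht.1 ht.2)
      (mem_of_superset h_nhds hw_surj)
  have hw_deriv : HasDerivAt w (w' t) (F (w t)) := by
    rw [hFw ht']
    exact (hd ht').1
  exact ⟨hFw ht',
    hw_deriv.of_local_left_inverse hF_cont (hd ht').2.ne (eventually_of_mem h_nhds hwF)⟩

lemma tendsto_sub_const_nhdsGT (c : ℝ) : Tendsto (fun t => t - c) (𝓝[>] c) (𝓝[>] 0) :=
  tendsto_nhdsWithin_iff.2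
    ⟨tendsto_sub_nhds_zero_iff.2 (tendsto_id.mono_left nhdsWithin_le_nhds),
      eventually_mem_nhdsWithin.mono fun _ ht => mem_Ioi.2 (sub_pos.2 ht)⟩

lemma exists_time_function_of_hasDerivAt_neg {h : ℝ → ℝ} (hh_pos : ∀ᶠ u in atTop, 0 < h u)
    (hw : ∀ᶠ t in 𝓝[>] c, HasDerivAt w (-(h (w t))) t) (hw_top : Tendsto w (𝓝[>] c) atTop) :
    ∃ F : ℝ → ℝ, (∀ᶠ t in 𝓝[>] c, F (w t) = t - c) ∧ Tendsto F atTop (𝓝[>] 0) ∧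
      ∀ᶠ u in atTop, HasDerivAt F (-(h u)⁻¹) u := by
  obtain ⟨τ, hτ⟩ := exists_leftInverse_hasDerivAt_of_tendsto_atTop hw
    ((hw_top.eventually hh_pos).mono fun t ht => neg_neg_of_pos ht) hw_top
  have hτw : ∀ᶠ t in 𝓝[>] c, τ (w t) - c = t - c := hτ.mono fun t ht => by rw [ht.1]
  have hw_map : map w (𝓝[>] c) = atTop :=
    map_nhdsGT_eq_atTop (hw.mono fun t ht => ht.continuousAt) hw_top
  refine ⟨fun u => τ u - c, hτw, ?_, ?_⟩ <;> rw [← hw_map]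
  · exact tendsto_map'_iff.2 ((tendsto_sub_const_nhdsGT c).congr' (hτw.mono fun t ht => ht.symm))
  · exact eventually_map.2 (hτ.mono fun t ht => by simpa only [neg_inv] using ht.2.sub_const c)

lemma tendsto_comp_div_of_hasDerivAt {F g h v : ℝ → ℝ} {L : ℝ}
    (hgh : Tendsto (fun u => g u / h u) atTop (𝓝 L))
    (hF : ∀ᶠ u in atTop, HasDerivAt F (-(h u)⁻¹) u) (hF_zero : Tendsto F atTop (𝓝 0))
    (hv : ∀ᶠ t in 𝓝[>] c, HasDerivAt v (-(g (v t))) t) (hv_top : Tendsto v (𝓝[>] c) atTop) :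
    Tendsto (fun t => F (v t) / (t - c)) (𝓝[>] c) (𝓝 L) := by
  have hFv : ∀ᶠ t in 𝓝[>] c, HasDerivAt (fun t => F (v t)) (g (v t) / h (v t)) t := by
    filter_upwards [hv, hv_top.eventually hF] with t hvt hFt
    rw [div_eq_inv_mul, ← neg_mul_neg]
    exact hFt.comp t hvt
  refine HasDerivAt.lhopital_zero_nhdsGT hFv
    (Eventually.of_forall fun t => (hasDerivAt_id t).sub_const c)
    (Eventually.of_forall fun _ => one_ne_zero) (hF_zero.comp hv_top)
    (tendsto_nhdsWithin_iff.1 (tendsto_sub_const_nhdsGT c)).1 ?_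
  simpa only [div_one, Function.comp_def] using hgh.comp hv_top

end BlowUp

lemma exists_antitoneOn_Ici_of_hasDerivAt_nonpos {F f : ℝ → ℝ}
    (hF : ∀ᶠ u in atTop, HasDerivAt F (f u) u) (hf : ∀ᶠ u in atTop, f u ≤ 0) :
    ∃ b, AntitoneOn F (Ici b) := by
  obtain ⟨b, hb⟩ := eventually_atTop.1 (hF.and hf)
  exact ⟨b, antitoneOn_of_hasDerivWithinAt_nonpos (convex_Ici b)
    (fun u hu => (hb u hu).1.continuousAt.continuousWithinAt)
    (fun u hu => (hb u (interior_subset hu)).1.hasDerivWithinAt)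
    (fun u hu => (hb u (interior_subset hu)).2)⟩

theorem blowup_ode_asymptotic_equivalence_RV_general {γ t₀ : ℝ} (hγ : 1 < γ) {g h v w : ℝ → ℝ}
    (hh_pos : ∀ᶠ u in atTop, 0 < h u) (hh : IsRV h γ)
    (hgh : Tendsto (fun u => g u / h u) atTop (𝓝 1))
    (hv : ∀ᶠ t in 𝓝[>] t₀, HasDerivAt v (-(g (v t))) t)
    (hw : ∀ᶠ t in 𝓝[>] t₀, HasDerivAt w (-(h (w t))) t)
    (hv_top : Tendsto v (𝓝[>] t₀) atTop) (hw_top : Tendsto w (𝓝[>] t₀) atTop) :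
    Tendsto (fun t => v t / w t) (𝓝[>] t₀) (𝓝 1) := by
  obtain ⟨F, hFw, hF_lim, hF_deriv⟩ := exists_time_function_of_hasDerivAt_neg hh_pos hw hw_top
  obtain ⟨hF_zero, hF_pos⟩ := tendsto_nhdsWithin_iff.1 hF_lim
  obtain ⟨b, hF_anti⟩ : ∃ b, AntitoneOn F (Ici b) := exists_antitoneOn_Ici_of_hasDerivAt_nonpos
    hF_deriv (hh_pos.mono fun u hu => (neg_neg_of_pos (inv_pos.2 hu)).le)
  have hF_RV : IsRV F (-γ + 1) := hh.inv.neg.of_hasDerivAt hF_deriv hF_zero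
  have hFv : Tendsto (fun t => F (v t) / (t - t₀)) (𝓝[>] t₀) (𝓝 1) :=
    tendsto_comp_div_of_hasDerivAt hgh hF_deriv hF_zero hv hv_top
  refine hF_RV.tendsto_div_of_antitoneOn (by linarith) hF_anti hF_pos hv_top hw_top ?_
  exact hFv.congr' (hFw.mono fun t ht => by simp only [ht])

/-- Let `h ∈ RV_γ`, `γ > 1`, be positive and continuous on `[a,∞)`, `g` continuous
on `[a,∞)` with `g/h → 1` at infinity. If `v, w` solve `v' = -g(v)`, `w' = -h(w)` on
`(0,T]` with `v, w → ∞` as `t → 0⁺`, then `v(t)/w(t) → 1` as `t → 0⁺`. -/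
theorem blowup_ode_asymptotic_equivalence_RV (a γ : ℝ) (ha : 0 < a) (hγ : 1 < γ)
    (g h : ℝ → ℝ)
    (hgc : ContinuousOn g (Ici a)) (hhc : ContinuousOn h (Ici a))
    (hhpos : ∀ u, a ≤ u → 0 < h u) (hRV : IsRV h γ)
    (hlim : Tendsto (fun u => g u / h u) atTop (𝓝 1))
    (T : ℝ) (hT : 0 < T) (v w : ℝ → ℝ)
    (hva : ∀ t ∈ Ioc (0:ℝ) T, a ≤ v t) (hwa : ∀ t ∈ Ioc (0:ℝ) T, a ≤ w t)
    (hv : ∀ t ∈ Ioc (0:ℝ) T, HasDerivAt v (-(g (v t))) t)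
    (hw : ∀ t ∈ Ioc (0:ℝ) T, HasDerivAt w (-(h (w t))) t)
    (hv0 : Tendsto v (𝓝[>] (0:ℝ)) atTop) (hw0 : Tendsto w (𝓝[>] (0:ℝ)) atTop) :
    Tendsto (fun t => v t / w t) (𝓝[>] (0:ℝ)) (𝓝 1) := by
  have hT_near : ∀ᶠ t in 𝓝[>] (0 : ℝ), t ∈ Ioc (0 : ℝ) T := Ioc_mem_nhdsGT hT
  exact blowup_ode_asymptotic_equivalence_RV_general hγ ((eventually_ge_atTop a).mono hhpos) hRV
    hlim (hT_near.mono hv) (hT_near.mono hw) hv0 hw0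
end
end
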